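/- For every s > 0 there exists C > 0 such that the following holds. Let u : ℝ³ → ℂ be differentiable with ∇u ∈ L²(ℝ³) and ‖u‖_{L²} = 1, and let α : ℝ³ → ℂ satisfy ∫_{ℝ³} ω(k)^{2s}|α(k)|² dk < ∞. Define F_α(x) = 2 Re ∫_{ℝ³} k B₀(k) e^{ik·x} α(k) dk ∈ ℝ³ and g_{u,α}(k) = 2 k B₀(k) · ∫_{ℝ³} e^{−ik·x} F_α(x) |u(x)|² dx. Then sup_{k∈ℝ³} |g_{u,α}(k)| ≤ C ‖u‖_{H¹} ‖α‖_{h_s} and ∫_{ℝ³} ω(k)|g_{u,α}(k)|² dk ≤ C ‖u‖_{H¹}² ‖α‖_{h_s}². -/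

import Mathlib

open MeasureTheory
open scoped ENNReal

noncomputable section

/-- The dispersion relation `ω(k) = √(1+|k|²)` of the massive scalar field. -/
def ω (k : EuclideanSpace ℝ (Fin 3)) : ℝ := Real.sqrt (1 + ‖k‖ ^ 2)

/-- The Gross dressing form factor `B₀(k) = 1/(√(ω(k))·(|k|²+ω(k)))`. -/
def B0 (k : EuclideanSpace ℝ (Fin 3)) : ℝ := 1 / (Real.sqrt (ω k) * (‖k‖ ^ 2 + ω k))

/-- The square of the `H¹`-norm, `‖u‖_{H¹}² = ‖u‖_{L²}² + ‖∇u‖_{L²}²`. -/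
def H1sq (u : EuclideanSpace ℝ (Fin 3) → ℂ) : ℝ :=
  (∫ x, ‖u x‖ ^ 2) + ∫ x, ‖fderiv ℝ u x‖ ^ 2

/-- The `H¹`-norm of `u`. -/
def H1norm (u : EuclideanSpace ℝ (Fin 3) → ℂ) : ℝ := Real.sqrt (H1sq u)

/-- The weighted norm `‖α‖_{h_s} = (∫ ω(k)^{2s}|α(k)|² dk)^{1/2}`. -/
def hsNorm (s : ℝ) (α : EuclideanSpace ℝ (Fin 3) → ℂ) : ℝ :=
  Real.sqrt (∫ k, ω k ^ (2 * s) * ‖α k‖ ^ 2)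

/-- The `j`-th component of the dressed vector potential
`F_α(x) = 2 Re ∫ k B₀(k) e^{ik·x} α(k) dk`. -/
def Fα (α : EuclideanSpace ℝ (Fin 3) → ℂ) (j : Fin 3) (x : EuclideanSpace ℝ (Fin 3)) : ℝ :=
  2 * (∫ k, ((k j * B0 k : ℝ) : ℂ) *
    Complex.exp (Complex.I * ((inner ℝ k x : ℝ) : ℂ)) * α k).re

/-- `g_{u,α}(k) = 2 k B₀(k) · ∫ e^{−ik·x} F_α(x) |u(x)|² dx`. -/
def gualpha (u α : EuclideanSpace ℝ (Fin 3) → ℂ) (k : EuclideanSpace ℝ (Fin 3)) : ℂ :=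
  ((2 * B0 k : ℝ) : ℂ) * ∑ j : Fin 3, ((k j : ℝ) : ℂ) *
    ∫ x, Complex.exp (-(Complex.I * ((inner ℝ k x : ℝ) : ℂ))) *
      ((Fα α j x : ℝ) : ℂ) * ((‖u x‖ ^ 2 : ℝ) : ℂ)

/-!
Since `|k| B₀(k) ≤ ω(k)^{-3/2}`, the Cauchy–Schwarz inequality gives
`|F_α| ≤ 2 ‖ω^{-3/2-s}‖_{L²} ‖α‖_{h_s}` with `ω^{-3/2-s} ∈ L²(ℝ³)`, and the pointwise bound follows
at once. For the `L²` bound, `ω (|k| B₀)² ≤ |k|^{-2}`, so it suffices to control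
`∫ |ĥ(k)|² / |k|² dk` for `h = F_α |u|²`. Writing `1/|k|² = ∫₀^∞ exp(-t|k|²) dt` and Fourier
transforming the Gaussians bounds this by the Coulomb energy
`2π² ∬ |h(x)| |h(y)| / |x - y| dx dy`. As `1/r ≤ 1 + 1/r²`, Hardy's inequality for `u` around each
point bounds the energy by a multiple of `‖F_α‖_∞² ‖u‖_{L²}² ‖u‖_{H¹}²`.
-/

open Set Module
open Complex (exp I)
open scoped ComplexConjugate

section RieszConstant

theorem lintegral_Ioi_exp_neg_mul {c : ℝ} (hc : 0 ≤ c) :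
    ∫⁻ t in Ioi (0 : ℝ), ENNReal.ofReal (Real.exp (-(t * c))) = (ENNReal.ofReal c)⁻¹ := by
  rcases hc.eq_or_lt with rfl | hc
  · simp
  · rw [← ofReal_integral_eq_lintegral_ofReal]
    · have := integral_exp_mul_Ioi (neg_lt_zero.2 hc) 0
      simp_rw [neg_mul, mul_comm c] at this
      rw [this]
      simp [ENNReal.ofReal_inv_of_pos hc]
    · simpa only [mul_comm, mul_neg, IntegrableOn] using
        integrableOn_exp_mul_Ioi (neg_lt_zero.2 hc) 0
    · exact .of_forall fun t => Real.exp_nonneg _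

theorem lintegral_Ioi_rpow_neg_mul_exp_neg_div {a b : ℝ} (ha : 1 < a) (hb : 0 < b) :
    ∫⁻ t in Ioi (0 : ℝ), ENNReal.ofReal (t ^ (-a) * Real.exp (-(b / t))) =
      ENNReal.ofReal (b ^ (1 - a) * Real.Gamma (a - 1)) := by
  have hinv := integral_comp_rpow_Ioi (fun t : ℝ => t ^ (a - 1 - 1) * Real.exp (-(b * t)))
    (p := -1) (by norm_num)
  rw [Real.integral_rpow_mul_exp_neg_mul_Ioi (sub_pos.2 ha) hb] at hinv
  have hval : ∫ t in Ioi (0 : ℝ), t ^ (-a) * Real.exp (-(b / t)) =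
      b ^ (1 - a) * Real.Gamma (a - 1) := by
    rw [one_div, Real.inv_rpow hb.le, ← Real.rpow_neg hb.le, neg_sub] at hinv
    rw [← hinv]
    refine setIntegral_congr_fun measurableSet_Ioi fun t ht => ?_
    have ht' : 0 < t := ht
    simp only [abs_neg, abs_one, one_mul, smul_eq_mul]
    rw [← mul_assoc, ← Real.rpow_mul ht'.le, ← Real.rpow_add ht', Real.rpow_neg_one, div_eq_mul_inv]
    ring_nf
  rw [← hval, ofReal_integral_eq_lintegral_ofReal]
  · refine .of_integral_ne_zero ?_
    rw [hval]
    have := Real.Gamma_pos_of_pos (sub_pos.2 ha)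
    positivity
  · refine ae_restrict_of_forall_mem measurableSet_Ioi fun t ht => ?_
    exact mul_nonneg (Real.rpow_nonneg (le_of_lt ht) _) (Real.exp_nonneg _)

/-- The Riesz constant `c_d = π^{d/2} 4^{d/2-1} Γ(d/2-1)`: in dimension `d > 2` the Fourier
transform of `1/|k|²`, in the convention of `angularFourier`, is `c_d / |x|^{d-2}`. -/
def rieszConst (d : ℕ) : ℝ :=
  Real.pi ^ (d / 2 : ℝ) * 4 ^ (d / 2 - 1 : ℝ) * Real.Gamma (d / 2 - 1)

theorem rieszConst_pos {d : ℕ} (hd : 2 < d) : 0 < rieszConst d := by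
  have hd' : (2 : ℝ) < d := by exact_mod_cast hd
  have := Real.Gamma_pos_of_pos (s := d / 2 - 1) (by linarith)
  unfold rieszConst
  positivity

theorem lintegral_Ioi_heatKernel_le {V : Type*} [SeminormedAddCommGroup V] {d : ℕ} (hd : 2 < d)
    (z : V) :
    ∫⁻ t in Ioi (0 : ℝ), ENNReal.ofReal ((Real.pi / t) ^ (d / 2 : ℝ) *
      Real.exp (-(‖z‖ ^ 2 / (4 * t)))) ≤ ENNReal.ofReal (rieszConst d) / ‖z‖ₑ ^ (d - 2) := by
  have hd' : (1 : ℝ) < d / 2 := by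
    rw [one_lt_div two_pos]
    exact_mod_cast hd
  have hconst := rieszConst_pos hd
  rcases (norm_nonneg z).eq_or_lt with hz | hz
  · have hz' : ‖z‖ₑ = 0 := by rw [← ofReal_norm, ← hz, ENNReal.ofReal_zero]
    rw [hz', zero_pow (by lia), ENNReal.div_zero (by simpa using hconst)]
    exact le_top
  refine Eq.le ?_
  calc ∫⁻ t in Ioi (0 : ℝ), ENNReal.ofReal ((Real.pi / t) ^ (d / 2 : ℝ) *
        Real.exp (-(‖z‖ ^ 2 / (4 * t))))
      = ENNReal.ofReal (Real.pi ^ (d / 2 : ℝ)) * ∫⁻ t in Ioi (0 : ℝ),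
          ENNReal.ofReal (t ^ (-(d / 2 : ℝ)) * Real.exp (-(‖z‖ ^ 2 / 4 / t))) := by
        rw [← lintegral_const_mul' _ _ ENNReal.ofReal_ne_top]
        refine setLIntegral_congr_fun measurableSet_Ioi fun t ht => ?_
        have ht' : 0 < t := ht
        rw [← ENNReal.ofReal_mul (by positivity), Real.div_rpow Real.pi_pos.le ht'.le,
          Real.rpow_neg ht'.le, div_div, div_eq_mul_inv, mul_assoc]
    _ = ENNReal.ofReal (rieszConst d / ‖z‖ ^ (d - 2)) := by
        rw [lintegral_Ioi_rpow_neg_mul_exp_neg_div hd' (by positivity),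
          ← ENNReal.ofReal_mul (by positivity), Real.div_rpow (by positivity) (by norm_num)]
        rw [← Real.rpow_natCast ‖z‖ 2, ← Real.rpow_mul hz.le, ← Real.rpow_natCast ‖z‖ (d - 2),
          Nat.cast_sub hd.le, ← neg_sub (d / 2 : ℝ) 1, Real.rpow_neg (by norm_num : (0 : ℝ) ≤ 4)]
        have : ((2 : ℕ) : ℝ) * -(d / 2 - 1) = -(d - (2 : ℕ)) := by push_cast; ring
        rw [this, Real.rpow_neg hz.le, rieszConst, div_inv_eq_mul]
        congr 1
        ring
    _ = ENNReal.ofReal (rieszConst d) / ‖z‖ₑ ^ (d - 2) := by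
        rw [ENNReal.ofReal_div_of_pos (by positivity), ENNReal.ofReal_pow hz.le, ofReal_norm]

end RieszConstant

section AngularFourier

variable {V : Type*} [NormedAddCommGroup V] [InnerProductSpace ℝ V] [FiniteDimensional ℝ V]
  [MeasurableSpace V] [BorelSpace V] {h : V → ℂ}

/-- The Fourier transform in the angular frequency convention of the Nelson model, without
normalising factor: `ĥ(k) = ∫ e^{-ik·x} h(x) dx`. -/
def angularFourier (h : V → ℂ) : V → ℂ :=
  VectorFourier.fourierIntegral Real.probChar volume (innerₗ V) h

theorem angularFourier_apply (h : V → ℂ) (k : V) :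
    angularFourier h k = ∫ x, exp (-(I * (inner ℝ k x : ℝ))) * h x := by
  simp only [angularFourier, VectorFourier.fourierIntegral_probChar, innerₗ_apply_apply,
    smul_eq_mul, real_inner_comm k, neg_mul, mul_comm I]

theorem norm_angularFourier_le (h : V → ℂ) (k : V) : ‖angularFourier h k‖ ≤ ∫ x, ‖h x‖ :=
  VectorFourier.norm_fourierIntegral_le_integral_norm _ _ _ _ _

theorem continuous_angularFourier (hh : Integrable h) : Continuous (angularFourier h) :=
  VectorFourier.fourierIntegral_continuous Real.continuous_probChar continuous_inner hh

theorem norm_angularFourier_sq_eq_integral_prod (h : V → ℂ) (k : V) :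
    ((‖angularFourier h k‖ ^ 2 : ℝ) : ℂ) =
      ∫ p : V × V, exp (-(I * (inner ℝ k (p.1 - p.2) : ℝ))) * (h p.1 * conj (h p.2)) := by
  rw [Complex.ofReal_pow, ← Complex.mul_conj', angularFourier_apply, ← integral_conj,
    ← integral_prod_mul, Measure.volume_eq_prod]
  congr 1 with p
  have phase : exp (-(I * (inner ℝ k (p.1 - p.2) : ℝ))) =
      exp (-(I * (inner ℝ k p.1 : ℝ))) * conj (exp (-(I * (inner ℝ k p.2 : ℝ)))) := by
    rw [← Complex.exp_conj, ← Complex.exp_add, inner_sub_right]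
    congr 1
    simp only [map_neg, map_mul, Complex.conj_I, Complex.conj_ofReal, Complex.ofReal_sub]
    ring
  rw [phase, map_mul]
  ring

theorem integrable_exp_neg_mul_norm_sq {t : ℝ} (ht : 0 < t) :
    Integrable fun k : V => Real.exp (-(t * ‖k‖ ^ 2)) := by
  have := GaussianFourier.integrable_cexp_neg_mul_sq_norm_add (b := t)
    (by simpa only [Complex.ofReal_re] using ht) 0 (0 : V)
  simpa [Complex.norm_exp, ← Complex.ofReal_pow] using this.norm

theorem integral_gaussian_mul_exp_neg_I_mul_inner {t : ℝ} (ht : 0 < t) (z : V) :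
    ∫ k : V, (Real.exp (-(t * ‖k‖ ^ 2)) : ℂ) * exp (-(I * (inner ℝ k z : ℝ))) =
      (((Real.pi / t) ^ (finrank ℝ V / 2 : ℝ) *
        Real.exp (-(‖z‖ ^ 2 / (4 * t))) : ℝ) : ℂ) := by
  have gaussian := GaussianFourier.integral_cexp_neg_mul_sq_norm_add (b := t)
    (by simpa only [Complex.ofReal_re] using ht) (-I) z
  rw [Complex.ofReal_mul, Complex.ofReal_cpow (by positivity)]
  convert gaussian using 2
  · ext k
    rw [Complex.ofReal_exp, ← Complex.exp_add, real_inner_comm]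
    push_cast
    ring_nf
  · push_cast
    ring_nf
  · rw [Complex.ofReal_exp, neg_sq, Complex.I_sq]
    push_cast
    ring_nf

theorem integral_gaussian_mul_norm_angularFourier_sq (hh : Integrable h) {t : ℝ} (ht : 0 < t) :
    ((∫ k, Real.exp (-(t * ‖k‖ ^ 2)) * ‖angularFourier h k‖ ^ 2 : ℝ) : ℂ) =
      ∫ p : V × V, (((Real.pi / t) ^ (finrank ℝ V / 2 : ℝ) *
        Real.exp (-(‖p.1 - p.2‖ ^ 2 / (4 * t))) : ℝ) : ℂ) * (h p.1 * conj (h p.2)) := by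
  have gaussian_integrable : Integrable fun k : V => (Real.exp (-(t * ‖k‖ ^ 2)) : ℂ) :=
    (integrable_exp_neg_mul_norm_sq ht).ofReal
  have conj_integrable : Integrable fun x => conj (h x) :=
    (LinearIsometryEquiv.integrable_comp_iff Complex.conjLIE).2 hh
  have integrand_integrable : Integrable
      (Function.uncurry fun (k : V) (p : V × V) => (Real.exp (-(t * ‖k‖ ^ 2)) : ℂ) *
        (exp (-(I * (inner ℝ k (p.1 - p.2) : ℝ))) * (h p.1 * conj (h p.2))))
      (volume.prod volume) := by
    refine (gaussian_integrable.mul_prod (hh.mul_prod conj_integrable)).mono ?_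
      (.of_forall fun q => ?_)
    · have phase :
          Continuous fun q : V × V × V => exp (-(I * (inner ℝ q.1 (q.2.1 - q.2.2) : ℝ))) := by
        fun_prop
      exact gaussian_integrable.aestronglyMeasurable.comp_fst.mul
        (phase.aestronglyMeasurable.mul (hh.mul_prod conj_integrable).aestronglyMeasurable.comp_snd)
    · have phase_norm (r : ℝ) : ‖exp (-(I * r))‖ = 1 := by simp [Complex.norm_exp]
      simp only [Function.uncurry, norm_mul, phase_norm, one_mul, le_refl]
  rw [← integral_complex_ofReal]
  simp only [Complex.ofReal_mul, norm_angularFourier_sq_eq_integral_prod, ← integral_const_mul]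
  rw [integral_integral_swap integrand_integrable]
  congr 1 with p
  rw [← Complex.ofReal_mul, ← integral_gaussian_mul_exp_neg_I_mul_inner ht, ← integral_mul_const]
  simp only [mul_assoc]

theorem lintegral_gaussian_mul_enorm_angularFourier_sq_le (hh : Integrable h) {t : ℝ}
    (ht : 0 < t) :
    ∫⁻ k, ENNReal.ofReal (Real.exp (-(t * ‖k‖ ^ 2))) * ‖angularFourier h k‖ₑ ^ 2 ≤
      ∫⁻ p : V × V, ENNReal.ofReal ((Real.pi / t) ^ (finrank ℝ V / 2 : ℝ) *
        Real.exp (-(‖p.1 - p.2‖ ^ 2 / (4 * t)))) * (‖h p.1‖ₑ * ‖h p.2‖ₑ) := by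
  have integrand_integrable :
      Integrable fun k => Real.exp (-(t * ‖k‖ ^ 2)) * ‖angularFourier h k‖ ^ 2 := by
    refine (integrable_exp_neg_mul_norm_sq ht).mul_bdd (c := (∫ x, ‖h x‖) ^ 2)
      ((continuous_angularFourier hh).norm.pow 2).aestronglyMeasurable (.of_forall fun k => ?_)
    rw [norm_pow, norm_norm]
    gcongr
    exact norm_angularFourier_le h k
  calc ∫⁻ k, ENNReal.ofReal (Real.exp (-(t * ‖k‖ ^ 2))) * ‖angularFourier h k‖ₑ ^ 2
      = ENNReal.ofReal (∫ k, Real.exp (-(t * ‖k‖ ^ 2)) * ‖angularFourier h k‖ ^ 2) := by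
        rw [ofReal_integral_eq_lintegral_ofReal integrand_integrable
          (.of_forall fun k => by positivity)]
        refine lintegral_congr fun k => ?_
        rw [ENNReal.ofReal_mul (Real.exp_nonneg _), ENNReal.ofReal_pow (norm_nonneg _), ofReal_norm]
    _ ≤ ‖((∫ k, Real.exp (-(t * ‖k‖ ^ 2)) * ‖angularFourier h k‖ ^ 2 : ℝ) : ℂ)‖ₑ := by
        rw [← ofReal_norm, Complex.norm_real]
        exact ENNReal.ofReal_le_ofReal (le_abs_self _)
    _ ≤ ∫⁻ p : V × V, ENNReal.ofReal ((Real.pi / t) ^ (finrank ℝ V / 2 : ℝ) *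
        Real.exp (-(‖p.1 - p.2‖ ^ 2 / (4 * t)))) * (‖h p.1‖ₑ * ‖h p.2‖ₑ) := by
        rw [integral_gaussian_mul_norm_angularFourier_sq hh ht]
        refine (enorm_integral_le_lintegral_enorm _).trans_eq (lintegral_congr fun p => ?_)
        rw [enorm_mul, enorm_mul, ← ofReal_norm, Complex.norm_real,
          Real.norm_of_nonneg (by positivity), ← ofReal_norm (conj _), RCLike.norm_conj,
          ofReal_norm]

theorem lintegral_enorm_angularFourier_sq_div_enorm_sq_le (hV : 2 < finrank ℝ V)
    (hh : Integrable h) :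
    ∫⁻ k, ‖angularFourier h k‖ₑ ^ 2 / ‖k‖ₑ ^ 2 ≤
      ENNReal.ofReal (rieszConst (finrank ℝ V)) *
        ∫⁻ x, ∫⁻ y, ‖h x‖ₑ * ‖h y‖ₑ / ‖x - y‖ₑ ^ (finrank ℝ V - 2) := by
  set d := finrank ℝ V
  have h_measurable : AEMeasurable (fun p : V × V => ‖h p.1‖ₑ * ‖h p.2‖ₑ) (volume.prod volume) :=
    hh.aestronglyMeasurable.comp_fst.enorm.mul hh.aestronglyMeasurable.comp_snd.enorm
  have kernel_measurable : Measurable fun q : ℝ × V × V => ENNReal.ofReal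
      ((Real.pi / q.1) ^ (d / 2 : ℝ) * Real.exp (-(‖q.2.1 - q.2.2‖ ^ 2 / (4 * q.1)))) := by
    fun_prop
  calc ∫⁻ k, ‖angularFourier h k‖ₑ ^ 2 / ‖k‖ₑ ^ 2
      = ∫⁻ k, ∫⁻ t in Ioi (0 : ℝ),
          ENNReal.ofReal (Real.exp (-(t * ‖k‖ ^ 2))) * ‖angularFourier h k‖ₑ ^ 2 := by
        refine lintegral_congr fun k => ?_
        rw [lintegral_mul_const' _ _ (by finiteness), lintegral_Ioi_exp_neg_mul (sq_nonneg _),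
          ENNReal.ofReal_pow (norm_nonneg k), ofReal_norm, mul_comm, div_eq_mul_inv]
    _ = ∫⁻ t in Ioi (0 : ℝ), ∫⁻ k,
          ENNReal.ofReal (Real.exp (-(t * ‖k‖ ^ 2))) * ‖angularFourier h k‖ₑ ^ 2 := by
        have := (continuous_angularFourier hh).measurable
        exact lintegral_lintegral_swap (by fun_prop)
    _ ≤ ∫⁻ t in Ioi (0 : ℝ), ∫⁻ p : V × V, ENNReal.ofReal ((Real.pi / t) ^ (d / 2 : ℝ) *
          Real.exp (-(‖p.1 - p.2‖ ^ 2 / (4 * t)))) * (‖h p.1‖ₑ * ‖h p.2‖ₑ) :=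
        setLIntegral_mono' measurableSet_Ioi fun t ht =>
          lintegral_gaussian_mul_enorm_angularFourier_sq_le hh ht
    _ = ∫⁻ p : V × V, (∫⁻ t in Ioi (0 : ℝ), ENNReal.ofReal ((Real.pi / t) ^ (d / 2 : ℝ) *
          Real.exp (-(‖p.1 - p.2‖ ^ 2 / (4 * t))))) * (‖h p.1‖ₑ * ‖h p.2‖ₑ) := by
        rw [lintegral_lintegral_swap (kernel_measurable.aemeasurable.mul h_measurable.comp_snd)]
        exact lintegral_congr fun p => lintegral_mul_const' _ _ (by finiteness)
    _ ≤ ∫⁻ p : V × V, ENNReal.ofReal (rieszConst d) *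
          (‖h p.1‖ₑ * ‖h p.2‖ₑ / ‖p.1 - p.2‖ₑ ^ (d - 2)) := by
        refine lintegral_mono fun p =>
          (mul_le_mul_left (lintegral_Ioi_heatKernel_le hV (p.1 - p.2)) _).trans_eq ?_
        simp only [div_eq_mul_inv]
        ring
    _ = _ := by
        rw [lintegral_const_mul' _ _ ENNReal.ofReal_ne_top, Measure.volume_eq_prod, lintegral_prod]
        exact h_measurable.div (by fun_prop)

end AngularFourier

section Hardy

variable {E : Type*} [NormedAddCommGroup E] [NormedSpace ℝ E] [FiniteDimensional ℝ E]
  [MeasurableSpace E] [BorelSpace E] {μ : Measure E} [μ.IsAddHaarMeasure]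

theorem lintegral_eq_lintegral_toSphere_lintegral_Ioi [Nontrivial E] {f : E → ℝ≥0∞}
    (hf : Measurable f) :
    ∫⁻ x, f x ∂μ = ∫⁻ θ : Metric.sphere (0 : E) 1, (∫⁻ r in Ioi (0 : ℝ),
      ENNReal.ofReal (r ^ (finrank ℝ E - 1)) * f (r • (θ : E))) ∂μ.toSphere := by
  have hsymm := μ.measurePreserving_homeomorphUnitSphereProd.symm
    (homeomorphUnitSphereProd E).toMeasurableEquiv
  calc ∫⁻ x, f x ∂μ = ∫⁻ x : ({0}ᶜ : Set E), f x ∂(μ.comap (↑)) := by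
        rw [lintegral_subtype_comap (measurableSet_singleton _).compl, restrict_compl_singleton]
    _ = ∫⁻ q : Metric.sphere (0 : E) 1 × Ioi (0 : ℝ), f (q.2.1 • (q.1 : E))
          ∂(μ.toSphere.prod (.volumeIoiPow (finrank ℝ E - 1))) :=
        (hsymm.lintegral_comp (hf.comp measurable_subtype_coe)).symm
    _ = ∫⁻ θ : Metric.sphere (0 : E) 1, (∫⁻ r : Ioi (0 : ℝ), f (r.1 • (θ : E))
          ∂(.volumeIoiPow (finrank ℝ E - 1))) ∂μ.toSphere :=
        lintegral_prod _ (by fun_prop)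
    _ = _ := by
        refine lintegral_congr fun θ => ?_
        rw [Measure.volumeIoiPow, lintegral_withDensity_eq_lintegral_mul _ (by fun_prop)
          (by fun_prop)]
        exact lintegral_subtype_comap measurableSet_Ioi
          fun r => ENNReal.ofReal (r ^ (finrank ℝ E - 1)) * f (r • (θ : E))

variable {F : Type*} [NormedAddCommGroup F] [InnerProductSpace ℝ F]

theorem neg_add_pow_mul_inner_le (m : ℕ) {r : ℝ} (hr : r ∈ Icc (0 : ℝ) 1) (v w : F) :
    -(((m + 1) * r ^ m * (1 - r) - r ^ (m + 1)) * ‖v‖ ^ 2 +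
        r ^ (m + 1) * (1 - r) * (2 * inner ℝ v w)) ≤
      (m + 1) * (4 * (r ^ (m + 2) * (‖v‖ ^ 2 + ‖w‖ ^ 2)) - 2⁻¹ * (r ^ m * ‖v‖ ^ 2)) := by
  have young : -(2 * r * inner ℝ v w) ≤ ‖v‖ ^ 2 / 4 + 4 * (r ^ 2 * ‖w‖ ^ 2) := by
    have := mul_le_mul_of_nonneg_left
      (neg_le_of_abs_le (abs_real_inner_le_norm v w)) hr.1
    linarith [sq_nonneg (‖v‖ / 2 - 2 * (r * ‖w‖))]
  have coeff_nonneg :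
      0 ≤ 4 * (m + 1) * r ^ 2 + (m + 1) / 2 - 1 / 4 - (m + 1) * r - 3 * r / 4 := by
    have : (0 : ℝ) ≤ m * (4 * r ^ 2 + 1 / 2 - r) :=
      mul_nonneg m.cast_nonneg (by linarith [sq_nonneg (2 * r - 1 / 4)])
    linarith [sq_nonneg (2 * r - 7 / 16)]
  have pow_nonneg : 0 ≤ r ^ m := pow_nonneg hr.1 m
  have cross_term := mul_nonneg (mul_nonneg pow_nonneg (sub_nonneg.2 hr.2)) (sub_nonneg.2 young)
  have norm_term := mul_nonneg (mul_nonneg pow_nonneg (sq_nonneg ‖v‖)) coeff_nonneg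
  have deriv_term : 0 ≤ r ^ m * (r ^ 2 * ‖w‖ ^ 2) * (4 * (m + r)) := by
    have := hr.1
    positivity
  rw [pow_succ, pow_add r m 2]
  linarith

theorem integral_pow_mul_norm_sq_le {f : ℝ → F} (hf : Differentiable ℝ f) (m : ℕ)
    (hf' : IntegrableOn (fun r => r ^ (m + 2) * ‖deriv f r‖ ^ 2) (Icc 0 1)) :
    ∫ r in Icc (0 : ℝ) 1, r ^ m * ‖f r‖ ^ 2 ≤
      8 * ∫ r in Icc (0 : ℝ) 1, r ^ (m + 2) * (‖f r‖ ^ 2 + ‖deriv f r‖ ^ 2) := by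
  have hfc := hf.continuous
  have hlow : IntegrableOn (fun r => r ^ m * ‖f r‖ ^ 2) (Icc (0 : ℝ) 1) :=
    Continuous.integrableOn_Icc (by fun_prop)
  have hhigh : IntegrableOn (fun r => r ^ (m + 2) * (‖f r‖ ^ 2 + ‖deriv f r‖ ^ 2))
      (Icc (0 : ℝ) 1) := by
    simp only [mul_add]
    exact (Continuous.integrableOn_Icc (by fun_prop)).add hf'
  -- The weight `r ^ (m + 1) * (1 - r)` vanishes at both endpoints: no boundary terms appear.
  have hderiv (r : ℝ) : HasDerivAt (fun r => -(r ^ (m + 1) * (1 - r) * ‖f r‖ ^ 2))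
      (-(((m + 1) * r ^ m * (1 - r) - r ^ (m + 1)) * ‖f r‖ ^ 2 +
        r ^ (m + 1) * (1 - r) * (2 * inner ℝ (f r) (deriv f r)))) r := by
    refine (((hasDerivAt_pow (m + 1) r).mul ((hasDerivAt_id' r).const_sub 1)).mul
      (hf r).hasDerivAt.norm_sq).neg.congr_deriv ?_
    simp only [Pi.mul_apply, Nat.add_sub_cancel, Nat.cast_add, Nat.cast_one]
    ring
  have hbound : IntegrableOn (fun r => (m + 1) *
      (4 * (r ^ (m + 2) * (‖f r‖ ^ 2 + ‖deriv f r‖ ^ 2)) - 2⁻¹ * (r ^ m * ‖f r‖ ^ 2)))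
      (Icc (0 : ℝ) 1) := ((hhigh.const_mul 4).sub (hlow.const_mul 2⁻¹)).const_mul _
  have hftc := intervalIntegral.sub_le_integral_of_hasDeriv_right_of_le zero_le_one (by fun_prop)
    (fun r _ => (hderiv r).hasDerivWithinAt) hbound
    fun r hr => neg_add_pow_mul_inner_le m (Ioo_subset_Icc_self hr) _ _
  rw [intervalIntegral.integral_of_le zero_le_one, ← integral_Icc_eq_integral_Ioc,
    integral_const_mul, integral_sub (hhigh.const_mul 4) (hlow.const_mul _), integral_const_mul,
    integral_const_mul, sub_self, mul_zero, zero_pow m.succ_ne_zero, zero_mul, zero_mul,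
    zero_mul, sub_self] at hftc
  linarith [nonneg_of_mul_nonneg_right hftc (by positivity : (0 : ℝ) < m + 1)]

theorem lintegral_Icc_pow_mul_enorm_sq_le [CompleteSpace F] {f : ℝ → F} (hf : Differentiable ℝ f)
    (m : ℕ) :
    ∫⁻ r in Icc (0 : ℝ) 1, ENNReal.ofReal (r ^ m) * ‖f r‖ₑ ^ 2 ≤
      8 * ∫⁻ r in Icc (0 : ℝ) 1,
        ENNReal.ofReal (r ^ (m + 2)) * (‖f r‖ₑ ^ 2 + ‖deriv f r‖ₑ ^ 2) := by
  have hfc := hf.continuous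
  have enorm_sq (x : F) : ‖x‖ₑ ^ 2 = ENNReal.ofReal (‖x‖ ^ 2) := by
    rw [ENNReal.ofReal_pow (norm_nonneg x), ofReal_norm]
  have lintegral_eq (n : ℕ) (g : ℝ → ℝ) :
      ∫⁻ r in Icc (0 : ℝ) 1, ENNReal.ofReal (r ^ n) * ENNReal.ofReal (g r) =
        ∫⁻ r in Icc (0 : ℝ) 1, ENNReal.ofReal (r ^ n * g r) :=
    setLIntegral_congr_fun measurableSet_Icc fun r hr =>
      (ENNReal.ofReal_mul (pow_nonneg hr.1 n)).symm
  have integrand_nonneg (n : ℕ) {g : ℝ → ℝ} (hg : ∀ r, 0 ≤ g r) :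
      ∀ᵐ r ∂volume.restrict (Icc (0 : ℝ) 1), 0 ≤ r ^ n * g r :=
    ae_restrict_of_forall_mem measurableSet_Icc fun r hr =>
      mul_nonneg (pow_nonneg hr.1 n) (hg r)
  simp only [enorm_sq, ← ENNReal.ofReal_add (sq_nonneg _) (sq_nonneg _), lintegral_eq]
  by_cases hf' : IntegrableOn (fun r => r ^ (m + 2) * ‖deriv f r‖ ^ 2) (Icc 0 1)
  · have hlow : IntegrableOn (fun r => r ^ m * ‖f r‖ ^ 2) (Icc (0 : ℝ) 1) :=
      Continuous.integrableOn_Icc (by fun_prop)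
    have hhigh : IntegrableOn (fun r => r ^ (m + 2) * (‖f r‖ ^ 2 + ‖deriv f r‖ ^ 2))
        (Icc (0 : ℝ) 1) := by
      simp only [mul_add]
      exact (Continuous.integrableOn_Icc (by fun_prop)).add hf'
    rw [← ofReal_integral_eq_lintegral_ofReal hlow (integrand_nonneg m fun _ => by positivity),
      ← ofReal_integral_eq_lintegral_ofReal hhigh (integrand_nonneg _ fun _ => by positivity),
      ← ENNReal.ofReal_ofNat 8, ← ENNReal.ofReal_mul (by norm_num)]
    exact ENNReal.ofReal_le_ofReal (integral_pow_mul_norm_sq_le hf m hf')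
  · suffices ∫⁻ r in Icc (0 : ℝ) 1,
        ENNReal.ofReal (r ^ (m + 2) * (‖f r‖ ^ 2 + ‖deriv f r‖ ^ 2)) = ⊤ by simp [this]
    have hmeas : StronglyMeasurable fun r => r ^ (m + 2) * ‖deriv f r‖ ^ 2 :=
      (continuous_pow (m + 2)).stronglyMeasurable.mul ((stronglyMeasurable_deriv f).norm.pow 2)
    rw [IntegrableOn, Integrable, and_iff_right hmeas.aestronglyMeasurable,
      hasFiniteIntegral_iff_ofReal (integrand_nonneg _ fun _ => by positivity), not_lt, top_le_iff]
      at hf'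
    refine top_unique (hf'.ge.trans (setLIntegral_mono' measurableSet_Icc fun r hr => ?_))
    exact ENNReal.ofReal_le_ofReal (mul_le_mul_of_nonneg_left
      (le_add_of_nonneg_left (sq_nonneg _)) (pow_nonneg hr.1 _))

theorem lintegral_Ioi_pow_mul_enorm_sq_le [CompleteSpace F] {f : ℝ → F} (hf : Differentiable ℝ f)
    (m : ℕ) :
    ∫⁻ r in Ioi (0 : ℝ), ENNReal.ofReal (r ^ m) * ‖f r‖ₑ ^ 2 ≤
      8 * ∫⁻ r in Ioi (0 : ℝ),
        ENNReal.ofReal (r ^ (m + 2)) * (‖f r‖ₑ ^ 2 + ‖deriv f r‖ₑ ^ 2) := by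
  rw [← Ioc_union_Ioi_eq_Ioi zero_le_one, lintegral_union measurableSet_Ioi Ioc_disjoint_Ioi_same,
    lintegral_union measurableSet_Ioi Ioc_disjoint_Ioi_same, mul_add,
    Measure.restrict_congr_set Ioc_ae_eq_Icc]
  gcongr ?_ + ?_
  · exact lintegral_Icc_pow_mul_enorm_sq_le hf m
  · rw [← lintegral_const_mul' _ _ (by simp)]
    refine setLIntegral_mono' measurableSet_Ioi fun r hr => ?_
    refine le_mul_of_one_le_of_le (by norm_num) ?_
    gcongr
    · exact hr.le
    · lia
    · exact le_self_add

theorem lintegral_enorm_sq_div_enorm_sq_le [CompleteSpace F] (hE : 3 ≤ finrank ℝ E) {u : E → F}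
    (hu : Differentiable ℝ u) :
    ∫⁻ x, ‖u x‖ₑ ^ 2 / ‖x‖ₑ ^ 2 ∂μ ≤ 8 * ∫⁻ x, (‖u x‖ₑ ^ 2 + ‖fderiv ℝ u x‖ₑ ^ 2) ∂μ := by
  have : Nontrivial E := Module.nontrivial_of_finrank_pos (R := ℝ) (by lia)
  have u_measurable : Measurable fun x => ‖u x‖ₑ := hu.continuous.enorm.measurable
  obtain ⟨m, hm⟩ : ∃ m, finrank ℝ E - 1 = m + 2 := ⟨finrank ℝ E - 3, by lia⟩
  rw [lintegral_eq_lintegral_toSphere_lintegral_Ioi (μ := μ) (by fun_prop),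
    lintegral_eq_lintegral_toSphere_lintegral_Ioi (μ := μ) (by fun_prop),
    ← lintegral_const_mul' _ _ (by simp), hm]
  refine lintegral_mono fun θ => ?_
  have hθ : ‖(θ : E)‖ = 1 := norm_eq_of_mem_sphere θ
  have hray (r : ℝ) : HasDerivAt (fun r : ℝ => u (r • (θ : E))) (fderiv ℝ u (r • (θ : E)) θ) r :=
    ((hu _).hasFDerivAt.comp_hasDerivAt r ((hasDerivAt_id' r).smul_const (θ : E))).congr_deriv
      (by rw [one_smul])
  calc ∫⁻ r in Ioi (0 : ℝ),
        ENNReal.ofReal (r ^ (m + 2)) * (‖u (r • (θ : E))‖ₑ ^ 2 / ‖r • (θ : E)‖ₑ ^ 2)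
      = ∫⁻ r in Ioi (0 : ℝ), ENNReal.ofReal (r ^ m) * ‖u (r • (θ : E))‖ₑ ^ 2 := by
        refine setLIntegral_congr_fun measurableSet_Ioi fun r hr => ?_
        have hr' : 0 < r := hr
        rw [← ofReal_norm (r • (θ : E)), norm_smul, hθ, mul_one, Real.norm_of_nonneg hr'.le,
          pow_add, ENNReal.ofReal_mul (by positivity), ENNReal.ofReal_pow hr'.le 2, mul_assoc,
          ENNReal.mul_div_cancel (by simpa using hr') (by simp)]
    _ ≤ 8 * ∫⁻ r in Ioi (0 : ℝ), ENNReal.ofReal (r ^ (m + 2)) *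
          (‖u (r • (θ : E))‖ₑ ^ 2 + ‖deriv (fun r : ℝ => u (r • (θ : E))) r‖ₑ ^ 2) :=
        lintegral_Ioi_pow_mul_enorm_sq_le (fun r => (hray r).differentiableAt) m
    _ ≤ 8 * ∫⁻ r in Ioi (0 : ℝ), ENNReal.ofReal (r ^ (m + 2)) *
          (‖u (r • (θ : E))‖ₑ ^ 2 + ‖fderiv ℝ u (r • (θ : E))‖ₑ ^ 2) := by
        gcongr with r
        rw [(hray r).deriv, enorm_le_iff_norm_le]
        simpa [hθ] using (fderiv ℝ u (r • (θ : E))).le_opNorm θ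

theorem lintegral_enorm_sq_div_enorm_sub_sq_le [CompleteSpace F] (hE : 3 ≤ finrank ℝ E) {u : E → F}
    (hu : Differentiable ℝ u) (y : E) :
    ∫⁻ x, ‖u x‖ₑ ^ 2 / ‖x - y‖ₑ ^ 2 ∂μ ≤ 8 * ∫⁻ x, (‖u x‖ₑ ^ 2 + ‖fderiv ℝ u x‖ₑ ^ 2) ∂μ := by
  have := lintegral_enorm_sq_div_enorm_sq_le (μ := μ) hE (u := fun x => u (x + y)) (by fun_prop)
  simp only [fderiv_comp_add_right] at this
  rw [← lintegral_sub_right_eq_self _ y,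
    ← lintegral_sub_right_eq_self (fun x => ‖u (x + y)‖ₑ ^ 2 + ‖fderiv ℝ u (x + y)‖ₑ ^ 2) y]
    at this
  simpa only [sub_add_cancel] using this

theorem lintegral_enorm_sq_div_enorm_sub_le [CompleteSpace F] (hE : 3 ≤ finrank ℝ E) {u : E → F}
    (hu : Differentiable ℝ u) (y : E) :
    ∫⁻ x, ‖u x‖ₑ ^ 2 / ‖x - y‖ₑ ∂μ ≤ 9 * ∫⁻ x, (‖u x‖ₑ ^ 2 + ‖fderiv ℝ u x‖ₑ ^ 2) ∂μ := by
  calc ∫⁻ x, ‖u x‖ₑ ^ 2 / ‖x - y‖ₑ ∂μ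
      ≤ ∫⁻ x, (‖u x‖ₑ ^ 2 + ‖u x‖ₑ ^ 2 / ‖x - y‖ₑ ^ 2) ∂μ := by
        refine lintegral_mono fun x => ?_
        rcases le_total 1 ‖x - y‖ₑ with h | h
        · exact (ENNReal.div_le_of_le_mul (le_mul_of_one_le_right' h)).trans le_self_add
        · refine le_add_left (ENNReal.div_le_div_left ?_ _)
          exact pow_le_of_le_one (zero_le) h two_ne_zero
    _ = ∫⁻ x, ‖u x‖ₑ ^ 2 ∂μ + ∫⁻ x, ‖u x‖ₑ ^ 2 / ‖x - y‖ₑ ^ 2 ∂μ :=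
        lintegral_add_left (hu.continuous.enorm.measurable.pow_const 2) _
    _ ≤ ∫⁻ x, (‖u x‖ₑ ^ 2 + ‖fderiv ℝ u x‖ₑ ^ 2) ∂μ +
          8 * ∫⁻ x, (‖u x‖ₑ ^ 2 + ‖fderiv ℝ u x‖ₑ ^ 2) ∂μ := by
        gcongr
        · exact le_self_add
        · exact lintegral_enorm_sq_div_enorm_sub_sq_le hE hu y
    _ = _ := by ring

end Hardy

section CoulombEnergy

variable {V : Type*} [NormedAddCommGroup V] [InnerProductSpace ℝ V] [FiniteDimensional ℝ V]
  [MeasurableSpace V] [BorelSpace V]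
  {F : Type*} [NormedAddCommGroup F] [InnerProductSpace ℝ F] [CompleteSpace F]

theorem lintegral_lintegral_enorm_mul_div_enorm_sub_le {G : Type*} [ENorm G]
    (hV : 3 ≤ finrank ℝ V) {h : V → G} {u : V → F} (hu : Differentiable ℝ u) {M : ℝ≥0∞}
    (hM : ∀ x, ‖h x‖ₑ ≤ M * ‖u x‖ₑ ^ 2) :
    ∫⁻ x, ∫⁻ y, ‖h x‖ₑ * ‖h y‖ₑ / ‖x - y‖ₑ ≤
      9 * M ^ 2 * (∫⁻ x, ‖u x‖ₑ ^ 2) * ∫⁻ x, (‖u x‖ₑ ^ 2 + ‖fderiv ℝ u x‖ₑ ^ 2) := by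
  have hu_measurable : Measurable fun x => ‖u x‖ₑ := hu.continuous.enorm.measurable
  calc ∫⁻ x, ∫⁻ y, ‖h x‖ₑ * ‖h y‖ₑ / ‖x - y‖ₑ
      ≤ ∫⁻ x, ∫⁻ y, M ^ 2 * ‖u x‖ₑ ^ 2 * (‖u y‖ₑ ^ 2 / ‖y - x‖ₑ) := by
        refine lintegral_mono fun x => lintegral_mono fun y => ?_
        rw [← mul_div_assoc, enorm_sub_rev]
        refine ENNReal.div_le_div_right ((mul_le_mul' (hM x) (hM y)).trans_eq ?_) _
        ring
    _ = ∫⁻ x, M ^ 2 * ‖u x‖ₑ ^ 2 * ∫⁻ y, ‖u y‖ₑ ^ 2 / ‖y - x‖ₑ :=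
        lintegral_congr fun x => lintegral_const_mul _ (by fun_prop)
    _ ≤ ∫⁻ x, M ^ 2 * ‖u x‖ₑ ^ 2 * (9 * ∫⁻ y, (‖u y‖ₑ ^ 2 + ‖fderiv ℝ u y‖ₑ ^ 2)) := by
        gcongr with x
        exact lintegral_enorm_sq_div_enorm_sub_le hV hu x
    _ = _ := by
        rw [lintegral_mul_const _ (by fun_prop), lintegral_const_mul _ (by fun_prop)]
        ring

theorem lintegral_enorm_angularFourier_sq_div_enorm_sq_le_of_enorm_le (hV : finrank ℝ V = 3)
    {h : V → ℂ} (hh : Integrable h) {u : V → F} (hu : Differentiable ℝ u) {M : ℝ≥0∞}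
    (hM : ∀ x, ‖h x‖ₑ ≤ M * ‖u x‖ₑ ^ 2) :
    ∫⁻ k, ‖angularFourier h k‖ₑ ^ 2 / ‖k‖ₑ ^ 2 ≤ ENNReal.ofReal (rieszConst 3) *
      (9 * M ^ 2 * (∫⁻ x, ‖u x‖ₑ ^ 2) * ∫⁻ x, (‖u x‖ₑ ^ 2 + ‖fderiv ℝ u x‖ₑ ^ 2)) := by
  have hriesz := lintegral_enorm_angularFourier_sq_div_enorm_sq_le (by lia) hh
  simp only [hV, Nat.reduceSub, pow_one] at hriesz
  refine hriesz.trans ?_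
  gcongr
  exact lintegral_lintegral_enorm_mul_div_enorm_sub_le hV.ge hu hM

end CoulombEnergy

theorem lintegral_enorm_sq_eq_ofReal_integral {X E : Type*} [MeasurableSpace X] {μ : Measure X}
    [NormedAddCommGroup E] {f : X → E} (hf : MemLp f 2 μ) :
    ∫⁻ x, ‖f x‖ₑ ^ 2 ∂μ = ENNReal.ofReal (∫ x, ‖f x‖ ^ 2 ∂μ) := by
  rw [ofReal_integral_eq_lintegral_ofReal (hf.integrable_norm_pow two_ne_zero)
    (.of_forall fun x => sq_nonneg _)]
  simp only [ENNReal.ofReal_pow (norm_nonneg _), ofReal_norm]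

section Nelson

local notation "ℝ³" => EuclideanSpace ℝ (Fin 3)

variable {u α : ℝ³ → ℂ}

theorem ω_sq (k : ℝ³) : ω k ^ 2 = 1 + ‖k‖ ^ 2 :=
  Real.sq_sqrt (by positivity)

theorem one_le_ω (k : ℝ³) : 1 ≤ ω k :=
  Real.one_le_sqrt.2 (le_add_of_nonneg_right (sq_nonneg _))

theorem ω_pos (k : ℝ³) : 0 < ω k :=
  zero_lt_one.trans_le (one_le_ω k)

@[fun_prop]
theorem continuous_ω : Continuous ω := by
  unfold ω
  fun_prop

theorem B0_nonneg (k : ℝ³) : 0 ≤ B0 k := by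
  have := ω_pos k
  unfold B0
  positivity

@[fun_prop]
theorem continuous_B0 : Continuous B0 := by
  unfold B0
  refine continuous_const.div (by fun_prop) fun k => ?_
  have := ω_pos k
  positivity

theorem norm_mul_B0_le_rpow (k : ℝ³) : ‖k‖ * B0 k ≤ ω k ^ (-(3 / 2) : ℝ) := by
  have hω := ω_pos k
  have hk : ‖k‖ ≤ ω k := Real.le_sqrt_of_sq_le (le_add_of_nonneg_left zero_le_one)
  have hden : ω k ^ 2 ≤ ‖k‖ ^ 2 + ω k := by linarith [ω_sq k, one_le_ω k]
  calc ‖k‖ * B0 k = ‖k‖ / (√(ω k) * (‖k‖ ^ 2 + ω k)) := mul_one_div _ _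
    _ ≤ ω k / (√(ω k) * ω k ^ 2) := by gcongr
    _ = (√(ω k) * ω k)⁻¹ := by field_simp
    _ = ω k ^ (-(3 / 2) : ℝ) := by
        rw [Real.rpow_neg hω.le, Real.sqrt_eq_rpow, ← Real.rpow_add_one hω.ne']
        norm_num

theorem norm_mul_B0_le_one (k : ℝ³) : ‖k‖ * B0 k ≤ 1 :=
  (norm_mul_B0_le_rpow k).trans (Real.rpow_le_one_of_one_le_of_nonpos (one_le_ω k) (by norm_num))

theorem ω_mul_norm_mul_B0_sq_le (k : ℝ³) : ω k * (‖k‖ * B0 k) ^ 2 ≤ (ω k ^ 2)⁻¹ := by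
  have hω := ω_pos k
  have hB0 := B0_nonneg k
  calc ω k * (‖k‖ * B0 k) ^ 2 ≤ ω k * (ω k ^ (-(3 / 2) : ℝ)) ^ 2 := by
        gcongr
        exact norm_mul_B0_le_rpow k
    _ = (ω k ^ 2)⁻¹ := by
        rw [← Real.rpow_mul_natCast hω.le, ← Real.rpow_one_add' hω.le (by norm_num),
          ← Real.rpow_natCast, ← Real.rpow_neg hω.le]
        norm_num

theorem norm_apply_mul_B0_le (j : Fin 3) (k : ℝ³) : ‖k j * B0 k‖ ≤ ‖k‖ * B0 k := by
  rw [norm_mul, Real.norm_of_nonneg (B0_nonneg k)]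
  exact mul_le_mul_of_nonneg_right (PiLp.norm_apply_le k j) (B0_nonneg k)

theorem memLp_ω_rpow {r : ℝ} (hr : r < -(3 / 2)) : MemLp (fun k => ω k ^ r) 2 := by
  have hcont : Continuous fun k => ω k ^ r :=
    continuous_ω.rpow_const fun k => .inl (ω_pos k).ne'
  rw [memLp_two_iff_integrable_sq hcont.aestronglyMeasurable]
  refine (integrable_rpow_neg_one_add_norm_sq (E := ℝ³) (r := -(2 * r))
    (by rw [finrank_euclideanSpace_fin]; push_cast; linarith)).congr (.of_forall fun k => ?_)
  simp only [ω, Real.sqrt_eq_rpow]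
  rw [← Real.rpow_mul (by positivity), ← Real.rpow_mul_natCast (by positivity)]
  congr 1
  push_cast
  ring

theorem ω_rpow_mul_norm_sq (s : ℝ) (α : ℝ³ → ℂ) (k : ℝ³) :
    (ω k ^ s * ‖α k‖) ^ 2 = ω k ^ (2 * s) * ‖α k‖ ^ 2 := by
  rw [mul_pow, ← Real.rpow_mul_natCast (ω_pos k).le, mul_comm s, Nat.cast_ofNat]

theorem memLp_ω_rpow_mul_norm {s : ℝ} (hα : AEStronglyMeasurable α)
    (hfin : ∫⁻ k, ENNReal.ofReal (ω k ^ (2 * s) * ‖α k‖ ^ 2) < ⊤) :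
    MemLp (fun k => ω k ^ s * ‖α k‖) 2 := by
  have hcont : Continuous fun k => ω k ^ s :=
    continuous_ω.rpow_const fun k => .inl (ω_pos k).ne'
  have hmeas : AEStronglyMeasurable fun k => ω k ^ s * ‖α k‖ :=
    hcont.aestronglyMeasurable.mul hα.norm
  refine (memLp_two_iff_integrable_sq hmeas).2 ⟨hmeas.pow 2, ?_⟩
  rw [hasFiniteIntegral_iff_ofReal (.of_forall fun k => sq_nonneg _)]
  simpa only [ω_rpow_mul_norm_sq] using hfin

theorem norm_mul_B0_mul_norm_le (s : ℝ) (α : ℝ³ → ℂ) (k : ℝ³) :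
    ‖k‖ * B0 k * ‖α k‖ ≤ ω k ^ (-(3 / 2) - s) * (ω k ^ s * ‖α k‖) := by
  rw [← mul_assoc, ← Real.rpow_add (ω_pos k), sub_add_cancel]
  gcongr
  exact norm_mul_B0_le_rpow k

theorem integrable_norm_mul_B0_mul_norm {s : ℝ} (hs : 0 < s) (hα : AEStronglyMeasurable α)
    (hfin : ∫⁻ k, ENNReal.ofReal (ω k ^ (2 * s) * ‖α k‖ ^ 2) < ⊤) :
    Integrable fun k => ‖k‖ * B0 k * ‖α k‖ := by
  have hweight : MemLp (fun k => ω k ^ (-(3 / 2) - s)) 2 := memLp_ω_rpow (by linarith)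
  refine (hweight.integrable_mul (memLp_ω_rpow_mul_norm hα hfin)).mono'
    ((Continuous.aestronglyMeasurable (by fun_prop)).mul hα.norm) (.of_forall fun k => ?_)
  rw [Real.norm_of_nonneg (mul_nonneg (mul_nonneg (norm_nonneg k) (B0_nonneg k)) (norm_nonneg _))]
  exact norm_mul_B0_mul_norm_le s α k

theorem integral_norm_mul_B0_mul_norm_le {s : ℝ} (hs : 0 < s) (hα : AEStronglyMeasurable α)
    (hfin : ∫⁻ k, ENNReal.ofReal (ω k ^ (2 * s) * ‖α k‖ ^ 2) < ⊤) :
    ∫ k, ‖k‖ * B0 k * ‖α k‖ ≤ √(∫ k, (ω k ^ (-(3 / 2) - s)) ^ 2) * hsNorm s α := by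
  have hweight : MemLp (fun k => ω k ^ (-(3 / 2) - s)) 2 := memLp_ω_rpow (by linarith)
  have hα' := memLp_ω_rpow_mul_norm hα hfin
  calc ∫ k, ‖k‖ * B0 k * ‖α k‖ ≤ ∫ k, ω k ^ (-(3 / 2) - s) * (ω k ^ s * ‖α k‖) :=
        integral_mono (integrable_norm_mul_B0_mul_norm hs hα hfin) (hweight.integrable_mul hα')
          (norm_mul_B0_mul_norm_le s α)
    _ ≤ √(∫ k, (ω k ^ (-(3 / 2) - s)) ^ 2) * √(∫ k, (ω k ^ s * ‖α k‖) ^ 2) := by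
        have := integral_mul_le_Lp_mul_Lq_of_nonneg Real.HolderConjugate.two_two
          (.of_forall fun k => Real.rpow_nonneg (ω_pos k).le _)
          (.of_forall fun k => mul_nonneg (Real.rpow_nonneg (ω_pos k).le s) (norm_nonneg (α k)))
          (by simpa using hweight) (by simpa using hα')
        simpa only [Real.rpow_two, Real.sqrt_eq_rpow] using this
    _ = √(∫ k, (ω k ^ (-(3 / 2) - s)) ^ 2) * hsNorm s α := by
        simp only [ω_rpow_mul_norm_sq, hsNorm]

theorem norm_formFactor_mul_le (α : ℝ³ → ℂ) (j : Fin 3) (k : ℝ³) :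
    ‖((k j * B0 k : ℝ) : ℂ) * α k‖ ≤ ‖k‖ * B0 k * ‖α k‖ := by
  rw [norm_mul, Complex.norm_real]
  exact mul_le_mul_of_nonneg_right (norm_apply_mul_B0_le j k) (norm_nonneg _)

theorem Fα_eq_re_angularFourier_neg (α : ℝ³ → ℂ) (j : Fin 3) (x : ℝ³) :
    Fα α j x = 2 * (angularFourier (fun k => ((k j * B0 k : ℝ) : ℂ) * α k) (-x)).re := by
  simp only [Fα, angularFourier_apply, inner_neg_left, Complex.ofReal_neg, mul_neg, neg_neg,
    real_inner_comm x, mul_left_comm, mul_assoc]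

theorem continuous_Fα {s : ℝ} (hs : 0 < s) (hα : AEStronglyMeasurable α)
    (hfin : ∫⁻ k, ENNReal.ofReal (ω k ^ (2 * s) * ‖α k‖ ^ 2) < ⊤) (j : Fin 3) :
    Continuous (Fα α j) := by
  have hint : Integrable fun k : ℝ³ => ((k j * B0 k : ℝ) : ℂ) * α k :=
    (integrable_norm_mul_B0_mul_norm hs hα hfin).mono'
      ((Continuous.aestronglyMeasurable (by fun_prop)).mul hα)
      (.of_forall (norm_formFactor_mul_le α j))
  have := continuous_angularFourier hint
  simp only [funext (Fα_eq_re_angularFourier_neg α j)]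
  fun_prop

theorem abs_Fα_le {s : ℝ} (hs : 0 < s) (hα : AEStronglyMeasurable α)
    (hfin : ∫⁻ k, ENNReal.ofReal (ω k ^ (2 * s) * ‖α k‖ ^ 2) < ⊤) (j : Fin 3) (x : ℝ³) :
    |Fα α j x| ≤ 2 * (√(∫ k, (ω k ^ (-(3 / 2) - s)) ^ 2) * hsNorm s α) := by
  rw [Fα_eq_re_angularFourier_neg, abs_mul, abs_two]
  gcongr
  calc |(angularFourier (fun k => ((k j * B0 k : ℝ) : ℂ) * α k) (-x)).re|
      ≤ ∫ k, ‖((k j * B0 k : ℝ) : ℂ) * α k‖ :=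
        (Complex.abs_re_le_norm _).trans (norm_angularFourier_le _ _)
    _ ≤ ∫ k, ‖k‖ * B0 k * ‖α k‖ :=
        integral_mono_of_nonneg (.of_forall fun k => norm_nonneg _)
          (integrable_norm_mul_B0_mul_norm hs hα hfin) (.of_forall (norm_formFactor_mul_le α j))
    _ ≤ _ := integral_norm_mul_B0_mul_norm_le hs hα hfin

/-- The density `F_α^j |u|²`, whose Fourier transform enters `g_{u,α}`. -/
def fieldDensity (u α : ℝ³ → ℂ) (j : Fin 3) (x : ℝ³) : ℂ :=
  (Fα α j x : ℂ) * ((‖u x‖ ^ 2 : ℝ) : ℂ)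

theorem norm_fieldDensity_le {M : ℝ} {j : Fin 3} (hM : ∀ x, |Fα α j x| ≤ M) (x : ℝ³) :
    ‖fieldDensity u α j x‖ ≤ M * ‖u x‖ ^ 2 := by
  rw [fieldDensity, norm_mul, Complex.norm_real, Complex.norm_real, norm_pow, norm_norm]
  exact mul_le_mul_of_nonneg_right (hM x) (sq_nonneg _)

theorem integrable_fieldDensity {M : ℝ} {j : Fin 3} (hu : MemLp u 2)
    (hF : Continuous (Fα α j)) (hM : ∀ x, |Fα α j x| ≤ M) : Integrable (fieldDensity u α j) := by
  refine ((hu.integrable_norm_pow two_ne_zero).const_mul M).mono' ?_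
    (.of_forall (norm_fieldDensity_le hM))
  exact (Complex.continuous_ofReal.comp hF).aestronglyMeasurable.mul
    (Complex.continuous_ofReal.comp_aestronglyMeasurable (hu.aestronglyMeasurable.norm.pow 2))

theorem norm_gualpha_sq_le (u α : ℝ³ → ℂ) (k : ℝ³) :
    ‖gualpha u α k‖ ^ 2 ≤
      4 * (‖k‖ * B0 k) ^ 2 * ∑ j, ‖angularFourier (fieldDensity u α j) k‖ ^ 2 := by
  have hg : gualpha u α k = ((2 * B0 k : ℝ) : ℂ) *
      ∑ j, ((k j : ℝ) : ℂ) * angularFourier (fieldDensity u α j) k := by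
    simp only [gualpha, angularFourier_apply, fieldDensity, mul_assoc]
  rw [hg, norm_mul, mul_pow, Complex.norm_real, norm_mul, Real.norm_two,
    Real.norm_of_nonneg (B0_nonneg k)]
  have hsum : ‖∑ j, ((k j : ℝ) : ℂ) * angularFourier (fieldDensity u α j) k‖ ^ 2 ≤
      ‖k‖ ^ 2 * ∑ j, ‖angularFourier (fieldDensity u α j) k‖ ^ 2 := by
    calc ‖∑ j, ((k j : ℝ) : ℂ) * angularFourier (fieldDensity u α j) k‖ ^ 2
        ≤ (∑ j, ‖k j‖ * ‖angularFourier (fieldDensity u α j) k‖) ^ 2 := by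
          gcongr
          exact norm_sum_le_of_le _ fun j _ => by rw [norm_mul, Complex.norm_real]
      _ ≤ (∑ j, ‖k j‖ ^ 2) * ∑ j, ‖angularFourier (fieldDensity u α j) k‖ ^ 2 :=
          Finset.sum_mul_sq_le_sq_mul_sq _ _ _
      _ = _ := by rw [EuclideanSpace.norm_sq_eq]
  calc (2 * B0 k) ^ 2 * ‖∑ j, ((k j : ℝ) : ℂ) * angularFourier (fieldDensity u α j) k‖ ^ 2
      ≤ (2 * B0 k) ^ 2 * (‖k‖ ^ 2 * ∑ j, ‖angularFourier (fieldDensity u α j) k‖ ^ 2) := by gcongr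
    _ = _ := by ring

theorem H1norm_sq (u : ℝ³ → ℂ) : H1norm u ^ 2 = H1sq u :=
  Real.sq_sqrt (by unfold H1sq; positivity)

theorem sqrt_integral_norm_sq_le_H1norm (u : ℝ³ → ℂ) : √(∫ x, ‖u x‖ ^ 2) ≤ H1norm u :=
  Real.sqrt_le_sqrt (le_add_of_nonneg_right (by positivity))

theorem norm_gualpha_le (hu : MemLp u 2) {M : ℝ} (hM : ∀ j x, |Fα α j x| ≤ M) (k : ℝ³) :
    ‖gualpha u α k‖ ≤ 4 * M * ∫ x, ‖u x‖ ^ 2 := by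
  have hM0 : 0 ≤ M := (abs_nonneg _).trans (hM 0 0)
  have hB0 := B0_nonneg k
  have hFourier (j : Fin 3) :
      ‖angularFourier (fieldDensity u α j) k‖ ≤ M * ∫ x, ‖u x‖ ^ 2 := by
    rw [← integral_const_mul]
    exact (norm_angularFourier_le _ k).trans
      (integral_mono_of_nonneg (.of_forall fun x => norm_nonneg _)
        ((hu.integrable_norm_pow two_ne_zero).const_mul M)
        (.of_forall (norm_fieldDensity_le (hM j))))
  refine le_of_pow_le_pow_left₀ two_ne_zero (by positivity) ?_
  calc ‖gualpha u α k‖ ^ 2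
      ≤ 4 * (‖k‖ * B0 k) ^ 2 * ∑ j, ‖angularFourier (fieldDensity u α j) k‖ ^ 2 :=
        norm_gualpha_sq_le u α k
    _ ≤ 4 * 1 ^ 2 * ∑ _j : Fin 3, (M * ∫ x, ‖u x‖ ^ 2) ^ 2 := by
        gcongr with j
        · exact norm_mul_B0_le_one k
        · exact hFourier j
    _ ≤ (4 * M * ∫ x, ‖u x‖ ^ 2) ^ 2 := by
        rw [Finset.sum_const, Finset.card_univ, Fintype.card_fin, nsmul_eq_mul]
        push_cast
        linarith [sq_nonneg (M * ∫ x, ‖u x‖ ^ 2)]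

theorem ofReal_ω_mul_norm_gualpha_sq_le (u α : ℝ³ → ℂ) (k : ℝ³) :
    ENNReal.ofReal (ω k * ‖gualpha u α k‖ ^ 2) ≤
      4 * ∑ j, ‖angularFourier (fieldDensity u α j) k‖ₑ ^ 2 / ‖k‖ₑ ^ 2 := by
  have hω := ω_pos k
  have hreal : ω k * ‖gualpha u α k‖ ^ 2 ≤
      4 * ((ω k ^ 2)⁻¹ * ∑ j, ‖angularFourier (fieldDensity u α j) k‖ ^ 2) :=
    calc ω k * ‖gualpha u α k‖ ^ 2
        ≤ ω k * (4 * (‖k‖ * B0 k) ^ 2 * ∑ j, ‖angularFourier (fieldDensity u α j) k‖ ^ 2) := by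
          gcongr
          exact norm_gualpha_sq_le u α k
      _ = 4 * (ω k * (‖k‖ * B0 k) ^ 2 * ∑ j, ‖angularFourier (fieldDensity u α j) k‖ ^ 2) := by
          ring
      _ ≤ _ := by
          gcongr
          exact ω_mul_norm_mul_B0_sq_le k
  have hweight : ENNReal.ofReal (ω k ^ 2)⁻¹ ≤ (‖k‖ₑ ^ 2)⁻¹ := by
    rw [ENNReal.ofReal_inv_of_pos (by positivity), ← ofReal_norm,
      ← ENNReal.ofReal_pow (norm_nonneg k), ω_sq]
    gcongr
    exact le_add_of_nonneg_left zero_le_one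
  calc ENNReal.ofReal (ω k * ‖gualpha u α k‖ ^ 2)
      ≤ 4 * (ENNReal.ofReal (ω k ^ 2)⁻¹ *
          ∑ j, ‖angularFourier (fieldDensity u α j) k‖ₑ ^ 2) := by
        refine (ENNReal.ofReal_le_ofReal hreal).trans_eq ?_
        rw [ENNReal.ofReal_mul zero_le_four, ENNReal.ofReal_mul (by positivity),
          ENNReal.ofReal_sum_of_nonneg fun j _ => sq_nonneg _, ENNReal.ofReal_ofNat]
        simp only [ENNReal.ofReal_pow (norm_nonneg _), ofReal_norm]
    _ ≤ 4 * ((‖k‖ₑ ^ 2)⁻¹ * ∑ j, ‖angularFourier (fieldDensity u α j) k‖ₑ ^ 2) := by gcongr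
    _ = _ := by simp only [Finset.mul_sum, div_eq_mul_inv, mul_comm]

theorem lintegral_enorm_sq_add_enorm_fderiv_sq (hu : MemLp u 2)
    (hDu : MemLp (fun x => fderiv ℝ u x) 2) :
    ∫⁻ x, (‖u x‖ₑ ^ 2 + ‖fderiv ℝ u x‖ₑ ^ 2) = ENNReal.ofReal (H1sq u) := by
  rw [lintegral_add_left' (hu.aestronglyMeasurable.enorm.pow_const 2),
    lintegral_enorm_sq_eq_ofReal_integral hu, lintegral_enorm_sq_eq_ofReal_integral hDu,
    ← ENNReal.ofReal_add (by positivity) (by positivity), H1sq]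

theorem lintegral_ω_mul_norm_gualpha_sq_le (hu : Differentiable ℝ u) (hu2 : MemLp u 2)
    (hDu : MemLp (fun x => fderiv ℝ u x) 2) (hF : ∀ j, Continuous (Fα α j)) {M : ℝ}
    (hM : ∀ j x, |Fα α j x| ≤ M) :
    ∫⁻ k, ENNReal.ofReal (ω k * ‖gualpha u α k‖ ^ 2) ≤
      ENNReal.ofReal (108 * rieszConst 3 * M ^ 2 * (∫ x, ‖u x‖ ^ 2) * H1sq u) := by
  have hM0 : 0 ≤ M := (abs_nonneg _).trans (hM 0 0)
  have hdensity (j : Fin 3) : Integrable (fieldDensity u α j) :=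
    integrable_fieldDensity hu2 (hF j) (hM j)
  have hdensity_le (j : Fin 3) (x : ℝ³) :
      ‖fieldDensity u α j x‖ₑ ≤ ENNReal.ofReal M * ‖u x‖ₑ ^ 2 := by
    rw [← ofReal_norm, ← ofReal_norm, ← ENNReal.ofReal_pow (norm_nonneg _),
      ← ENNReal.ofReal_mul hM0]
    exact ENNReal.ofReal_le_ofReal (norm_fieldDensity_le (hM j) x)
  have hmeasurable (j : Fin 3) :
      Measurable fun k => ‖angularFourier (fieldDensity u α j) k‖ₑ ^ 2 / ‖k‖ₑ ^ 2 := by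
    have := (continuous_angularFourier (hdensity j)).measurable
    fun_prop
  calc ∫⁻ k, ENNReal.ofReal (ω k * ‖gualpha u α k‖ ^ 2)
      ≤ ∫⁻ k, 4 * ∑ j, ‖angularFourier (fieldDensity u α j) k‖ₑ ^ 2 / ‖k‖ₑ ^ 2 :=
        lintegral_mono (ofReal_ω_mul_norm_gualpha_sq_le u α)
    _ = 4 * ∑ j, ∫⁻ k, ‖angularFourier (fieldDensity u α j) k‖ₑ ^ 2 / ‖k‖ₑ ^ 2 := by
        rw [lintegral_const_mul _ (by fun_prop), lintegral_finsetSum _ fun j _ => hmeasurable j]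
    _ ≤ 4 * ∑ _j : Fin 3, ENNReal.ofReal (rieszConst 3) * (9 * ENNReal.ofReal M ^ 2 *
          (∫⁻ x, ‖u x‖ₑ ^ 2) * ∫⁻ x, (‖u x‖ₑ ^ 2 + ‖fderiv ℝ u x‖ₑ ^ 2)) := by
        gcongr with j
        exact lintegral_enorm_angularFourier_sq_div_enorm_sq_le_of_enorm_le
          finrank_euclideanSpace_fin (hdensity j) hu (hdensity_le j)
    _ = ENNReal.ofReal (108 * rieszConst 3 * M ^ 2 * (∫ x, ‖u x‖ ^ 2) * H1sq u) := by
        rw [lintegral_enorm_sq_eq_ofReal_integral hu2,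
          lintegral_enorm_sq_add_enorm_fderiv_sq hu2 hDu,
          ENNReal.ofReal_mul' (by unfold H1sq; positivity),
          ENNReal.ofReal_mul' (by positivity), ENNReal.ofReal_mul' (sq_nonneg M),
          ENNReal.ofReal_mul (by norm_num), ENNReal.ofReal_pow hM0, ENNReal.ofReal_ofNat,
          Finset.sum_const, Finset.card_univ, Fintype.card_fin, nsmul_eq_mul]
        push_cast
        ring

theorem gualpha_bounds_general (s : ℝ) (hs : 0 < s) :
    ∃ C > 0, ∀ u α : ℝ³ → ℂ, Differentiable ℝ u → MemLp u 2 → MemLp (fun x => fderiv ℝ u x) 2 →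
      AEStronglyMeasurable α → ∫⁻ k, ENNReal.ofReal (ω k ^ (2 * s) * ‖α k‖ ^ 2) < ⊤ →
      (∀ k, ‖gualpha u α k‖ ≤ C * (√(∫ x, ‖u x‖ ^ 2) * H1norm u) * hsNorm s α) ∧
      ∫⁻ k, ENNReal.ofReal (ω k * ‖gualpha u α k‖ ^ 2) ≤
        ENNReal.ofReal (C * ((∫ x, ‖u x‖ ^ 2) * H1norm u ^ 2) * hsNorm s α ^ 2) := by
  set K := √(∫ k, (ω k ^ (-(3 / 2) - s)) ^ 2)
  have hR := rieszConst_pos (d := 3) (by norm_num)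
  refine ⟨8 * K + 432 * rieszConst 3 * K ^ 2 + 1, by positivity, fun u α hu hu2 hDu hα hfin => ?_⟩
  have hM := abs_Fα_le hs hα hfin
  have hhs : 0 ≤ hsNorm s α := Real.sqrt_nonneg _
  constructor
  · intro k
    calc ‖gualpha u α k‖ ≤ 4 * (2 * (K * hsNorm s α)) * ∫ x, ‖u x‖ ^ 2 := norm_gualpha_le hu2 hM k
      _ = 8 * K * (√(∫ x, ‖u x‖ ^ 2) * √(∫ x, ‖u x‖ ^ 2)) * hsNorm s α := by
          rw [Real.mul_self_sqrt (by positivity)]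
          ring
      _ ≤ _ := by
          gcongr
          · linarith [show 0 ≤ 432 * rieszConst 3 * K ^ 2 by positivity]
          · exact sqrt_integral_norm_sq_le_H1norm u
  · refine (lintegral_ω_mul_norm_gualpha_sq_le hu hu2 hDu (continuous_Fα hs hα hfin) hM).trans
      (ENNReal.ofReal_le_ofReal ?_)
    calc 108 * rieszConst 3 * (2 * (K * hsNorm s α)) ^ 2 * (∫ x, ‖u x‖ ^ 2) * H1sq u
        = 432 * rieszConst 3 * K ^ 2 * ((∫ x, ‖u x‖ ^ 2) * H1norm u ^ 2) * hsNorm s α ^ 2 := by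
          rw [H1norm_sq]
          ring
      _ ≤ _ := by
          gcongr
          linarith [show 0 ≤ 8 * K by positivity]

end Nelson

/-- For every `s > 0` there is `C > 0` such that for differentiable `u` with `∇u ∈ L²`,
`‖u‖_{L²} = 1`, and `α` with `∫ ω^{2s}|α|² < ∞`:
`sup_k |g_{u,α}(k)| ≤ C‖u‖_{H¹}‖α‖_{h_s}` and `∫ ω|g_{u,α}|² ≤ C‖u‖_{H¹}²‖α‖_{h_s}²`. -/
theorem gualpha_bounds (s : ℝ) (hs : 0 < s) :
    ∃ C > 0, ∀ (u α : EuclideanSpace ℝ (Fin 3) → ℂ),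
      Differentiable ℝ u → MemLp u 2 volume →
      MemLp (fun x => fderiv ℝ u x) 2 volume →
      (∫ x, ‖u x‖ ^ 2) = 1 →
      Measurable α →
      (∫⁻ k, ENNReal.ofReal (ω k ^ (2 * s) * ‖α k‖ ^ 2) < ⊤) →
      (∀ k, ‖gualpha u α k‖ ≤ C * H1norm u * hsNorm s α) ∧
      ∫⁻ k, ENNReal.ofReal (ω k * ‖gualpha u α k‖ ^ 2) ≤
        ENNReal.ofReal (C * H1norm u ^ 2 * hsNorm s α ^ 2) := by
  obtain ⟨C, hC, hbounds⟩ := gualpha_bounds_general s hs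
  refine ⟨C, hC, fun u α hu hu2 hDu h1 hα hfin => ?_⟩
  simpa only [h1, Real.sqrt_one, one_mul] using hbounds u α hu hu2 hDu hα.aestronglyMeasurable hfin

end
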